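/- Assume gcd(n, q(q−1)) = 1. Then for α ∈ F_Q^×, α is 1-normal for F_Q/F_q if and only if the conventional minimal polynomial of α is m_α(X) = X^{n−1} + X^{n−2} + ⋯ + X + 1 = (X^n − 1)/(X − 1) (equivalently, the minimal q-polynomial of α is the trace Tr(x) = Σ_{i=0}^{n−1} x^{q^i}). -/

import Mathlib

/-!
The map `α ↦ g_α` intertwines the `q`-Frobenius with multiplication by `X` modulo `Xⁿ - 1`:
`g_{α^q} = X g_α - α (Xⁿ - 1)` because `α^(q^n) = α`. Hence `f g_α ≡ g_{f(φ_q)(α)}` modulo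
`Xⁿ - 1` for `f ∈ F_q[X]`, and as `deg g_β < n`, the relation `f(φ_q)(α) = 0` is equivalent to
`Xⁿ - 1 ∣ f g_α` (`lineval_eq_zero_iff`).

The monic gcd `d` of `g_α` and `Xⁿ - 1` has coefficients in `F_q`: raising the coefficients to the
`q`-th power fixes `Xⁿ - 1` and turns `g_α` into `g_{α^q} ≡ X g_α`, where `X` is a unit modulo
`Xⁿ - 1`, so the conjugate of `d` divides `d` and therefore equals it. Consequently
`(Xⁿ - 1) / d`, which lies in `F_q[X]`, generates the annihilator of `α` (`exists_descended_gcd`),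
and `α` is `1`-normal exactly when `d = X - c` with `c ∈ F_q`. Such a `c` satisfies `cⁿ = 1` and
`c^(q-1) = 1`, so `c = 1` since `n` is coprime to `q - 1`.
-/

open Polynomial

/-- Evaluation of the `q`-linearized polynomial associated to `f`:
if `f = Σ aᵢ Xⁱ` then `lineval q f α = Σ aᵢ α^(q^i)` (i.e. `f(φ_q)(α)`). -/
noncomputable def lineval {Fq FQ : Type*} [CommSemiring Fq] [CommSemiring FQ] [Algebra Fq FQ]
    (q : ℕ) (f : Polynomial Fq) (α : FQ) : FQ :=
  f.sum fun i a => algebraMap Fq FQ a * α ^ q ^ i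

/-- `g_α(X) = Σ_{i=0}^{n-1} α^(q^i) X^(n-1-i) ∈ F_Q[X]`. -/
noncomputable def gpoly {FQ : Type*} [CommSemiring FQ] (q n : ℕ) (α : FQ) : Polynomial FQ :=
  ∑ i ∈ Finset.range n, Polynomial.C (α ^ q ^ i) * Polynomial.X ^ (n - 1 - i)

/-- `α` is `k`-normal for `F_Q/F_q`: `deg gcd(g_α(X), Xⁿ - 1) = k` in `F_Q[X]`. -/
def IsKNormal {FQ : Type*} [Field FQ] (q n k : ℕ) (α : FQ) : Prop :=
  letI := Classical.decEq (Polynomial FQ)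
  (EuclideanDomain.gcd (gpoly q n α) (Polynomial.X ^ n - 1)).natDegree = k

/-- `m` is the conventional minimal polynomial of `α`: the monic generator of the ideal
`{f ∈ F_q[X] : f(φ_q)(α) = 0}`. -/
def IsMinPoly {Fq FQ : Type*} [CommSemiring Fq] [CommSemiring FQ] [Algebra Fq FQ]
    (q : ℕ) (α : FQ) (m : Polynomial Fq) : Prop :=
  m.Monic ∧ lineval q m α = 0 ∧ ∀ g : Polynomial Fq, lineval q g α = 0 → m ∣ g

section

variable {Fq FQ : Type*} [Field Fq] [Field FQ]

/-- The relation `g_{α^q} = X g_α - α (Xⁿ - 1)`. -/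
lemma gpoly_pow (q n : ℕ) (α : FQ) (hα : α ^ q ^ n = α) :
    gpoly q n (α ^ q) = X * gpoly q n α - C α * (X ^ n - 1) := by
  have h1 : gpoly q n (α ^ q) =
      ∑ i ∈ Finset.range n, C (α ^ q ^ (i + 1)) * X ^ (n - (i + 1)) := by
    unfold gpoly
    refine Finset.sum_congr rfl fun i _ => ?_
    rw [← pow_mul, ← pow_succ', Nat.sub_sub, add_comm 1 i]
  have h2 : X * gpoly q n α = ∑ i ∈ Finset.range n, C (α ^ q ^ i) * X ^ (n - i) := by
    unfold gpoly
    rw [Finset.mul_sum]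
    refine Finset.sum_congr rfl fun i hi => ?_
    have : n - i = (n - 1 - i) + 1 := by
      have := Finset.mem_range.1 hi
      omega
    rw [this, pow_succ]
    ring
  have h3 := Finset.sum_range_succ (fun i => C (α ^ q ^ i) * X ^ (n - i)) n
  have h4 := Finset.sum_range_succ' (fun i => C (α ^ q ^ i) * X ^ (n - i)) n
  simp only [hα, pow_zero, pow_one, Nat.sub_self, Nat.sub_zero, mul_one] at h3 h4
  rw [h1, h2]
  linear_combination h3 - h4

lemma degree_gpoly_lt (q n : ℕ) (hn : 0 < n) (α : FQ) : (gpoly q n α).degree < n := by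
  unfold gpoly
  refine (degree_sum_le _ _).trans_lt ((Finset.sup_lt_iff (WithBot.bot_lt_coe n)).2 fun i _ => ?_)
  refine (degree_C_mul_X_pow_le _ _).trans_lt ?_
  exact Nat.cast_lt.2 (by omega)

lemma coeff_gpoly (q n : ℕ) (hn : 0 < n) (α : FQ) : (gpoly q n α).coeff (n - 1) = α := by
  unfold gpoly
  rw [finsetSum_coeff, Finset.sum_eq_single 0]
  · simp
  · intro i hi h0
    have := Finset.mem_range.1 hi
    rw [coeff_C_mul_X_pow, if_neg (by omega)]
  · intro h
    exact absurd (Finset.mem_range.2 hn) h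

lemma dvd_gpoly_iff (q n : ℕ) (hq : q ≠ 0) (hn : 0 < n) (α : FQ) :
    (X ^ n - 1 : FQ[X]) ∣ gpoly q n α ↔ α = 0 := by
  constructor
  · intro h
    have h0 : gpoly q n α = 0 := by
      refine eq_zero_of_dvd_of_degree_lt h ?_
      rw [← C_1, degree_X_pow_sub_C hn]
      exact degree_gpoly_lt q n hn α
    rw [← coeff_gpoly q n hn α, h0, coeff_zero]
  · rintro rfl
    have : gpoly q n (0 : FQ) = 0 := by
      unfold gpoly
      exact Finset.sum_eq_zero fun i _ => by simp [hq]
    rw [this]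
    exact dvd_zero _

lemma gpoly_add (p m n : ℕ) [Fact p.Prime] [CharP FQ p] (α β : FQ) :
    gpoly (p ^ m) n (α + β) = gpoly (p ^ m) n α + gpoly (p ^ m) n β := by
  unfold gpoly
  rw [← Finset.sum_add_distrib]
  refine Finset.sum_congr rfl fun i _ => ?_
  rw [← pow_mul, add_pow_char_pow, C_add, add_mul]

lemma gpoly_mul (q n : ℕ) (a α : FQ) (ha : a ^ q = a) :
    gpoly q n (a * α) = C a * gpoly q n α := by
  have hi : ∀ i, a ^ q ^ i = a := fun i => by
    induction i with
    | zero => simp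
    | succ i ih => rw [pow_succ, pow_mul, ih, ha]
  unfold gpoly
  rw [Finset.mul_sum]
  refine Finset.sum_congr rfl fun i _ => ?_
  rw [mul_pow, hi, C_mul, mul_assoc]

lemma dvd_X_pow_mul_gpoly_sub (q n : ℕ) (hQ : ∀ β : FQ, β ^ q ^ n = β) (α : FQ) (k : ℕ) :
    (X ^ n - 1 : FQ[X]) ∣ X ^ k * gpoly q n α - gpoly q n (α ^ q ^ k) := by
  induction k with
  | zero => simp
  | succ k ih =>
    have h : X ^ (k + 1) * gpoly q n α - gpoly q n (α ^ q ^ (k + 1)) =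
        X * (X ^ k * gpoly q n α - gpoly q n (α ^ q ^ k)) + (X ^ n - 1) * C (α ^ q ^ k) := by
      rw [pow_succ q k, pow_mul, gpoly_pow q n _ (hQ _)]
      ring
    rw [h]
    exact dvd_add (ih.mul_left _) (dvd_mul_right _ _)

variable [Algebra Fq FQ]

lemma lineval_add (q : ℕ) (f g : Fq[X]) (α : FQ) :
    lineval q (f + g) α = lineval q f α + lineval q g α :=
  sum_add_index f g _ (fun i => by simp) fun i a b => by rw [map_add, add_mul]

lemma lineval_monomial (q k : ℕ) (a : Fq) (α : FQ) :
    lineval q (monomial k a) α = algebraMap Fq FQ a * α ^ q ^ k :=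
  sum_monomial_index a _ (by simp)

/-- The congruence `f g_α ≡ g_{f(φ_q)(α)}` modulo `Xⁿ - 1`. -/
lemma dvd_map_mul_gpoly_sub (p m n : ℕ) [Fact p.Prime] [CharP FQ p]
    (hF : ∀ a : Fq, a ^ p ^ m = a) (hQ : ∀ β : FQ, β ^ (p ^ m) ^ n = β) (α : FQ) (f : Fq[X]) :
    (X ^ n - 1 : FQ[X]) ∣
      f.map (algebraMap Fq FQ) * gpoly (p ^ m) n α - gpoly (p ^ m) n (lineval (p ^ m) f α) := by
  induction f using Polynomial.induction_on' with
  | add f g hf hg =>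
    have h := dvd_add hf hg
    rw [lineval_add, gpoly_add, Polynomial.map_add, add_mul]
    convert h using 1
    ring
  | monomial k a =>
    have h := (dvd_X_pow_mul_gpoly_sub (p ^ m) n hQ α k).mul_left (C (algebraMap Fq FQ a))
    rw [lineval_monomial, gpoly_mul _ _ _ _ (by rw [← map_pow, hF]), map_monomial,
      ← C_mul_X_pow_eq_monomial]
    convert h using 1
    ring

lemma lineval_eq_zero_iff (p m n : ℕ) [Fact p.Prime] [CharP FQ p] (hn : 0 < n)
    (hF : ∀ a : Fq, a ^ p ^ m = a) (hQ : ∀ β : FQ, β ^ (p ^ m) ^ n = β) (α : FQ) (f : Fq[X]) :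
    lineval (p ^ m) f α = 0 ↔
      (X ^ n - 1 : FQ[X]) ∣ f.map (algebraMap Fq FQ) * gpoly (p ^ m) n α := by
  have hp : p ≠ 0 := (Fact.out : p.Prime).ne_zero
  rw [← dvd_gpoly_iff (p ^ m) n (pow_ne_zero _ hp) hn]
  exact (dvd_iff_dvd_of_dvd_sub (dvd_map_mul_gpoly_sub p m n hF hQ α f)).symm

/-- An element of an extension of the finite field `F_q` that is fixed by the `q`-Frobenius lies
in `F_q`: the `q` elements of `F_q` already exhaust the roots of `X^q - X`. -/
lemma mem_range_of_pow_eq [Fintype Fq] (x : FQ) (hx : x ^ Fintype.card Fq = x) :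
    x ∈ Set.range (algebraMap Fq FQ) := by
  have hsplit : (X ^ Fintype.card Fq - X : Fq[X]).Splits := splits_iff_card_roots.2 (by
    rw [FiniteField.roots_X_pow_card_sub_X,
      FiniteField.X_pow_card_sub_X_natDegree_eq Fq Fintype.one_lt_card]
    rfl)
  exact hsplit.mem_range_of_isRoot
    (FiniteField.X_pow_card_sub_X_ne_zero Fq Fintype.one_lt_card) (by simp [hx])

/-- The gcd `d` of `g_α` and `Xⁿ - 1` descends to a monic polynomial over `F_q`, and its cofactor
in `Xⁿ - 1` generates the annihilator of `α` in `F_q[X]`. -/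
lemma exists_descended_gcd [DecidableEq FQ[X]] [Fintype Fq] (p m n : ℕ) [Fact p.Prime]
    [CharP FQ p] (hn : 0 < n) (hcard : Fintype.card Fq = p ^ m)
    (hQ : ∀ β : FQ, β ^ (p ^ m) ^ n = β) (α : FQ) :
    ∃ d h : Fq[X], d.Monic ∧ d * h = X ^ n - 1 ∧
      d.natDegree = (EuclideanDomain.gcd (gpoly (p ^ m) n α) (X ^ n - 1)).natDegree ∧
      ∀ f : Fq[X], lineval (p ^ m) f α = 0 ↔ h ∣ f := by
  classical
  have hF : ∀ a : Fq, a ^ p ^ m = a := fun a => hcard ▸ FiniteField.pow_card a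
  set g := gpoly (p ^ m) n α with hg
  set G := EuclideanDomain.gcd g (X ^ n - 1) with hG
  have hN0 : (X ^ n - 1 : FQ[X]) ≠ 0 := (monic_X_pow_sub_C (1 : FQ) hn.ne').ne_zero
  have hG0 : G ≠ 0 := fun h => hN0 (EuclideanDomain.gcd_eq_zero_iff.1 h).2
  have hGd : Associated (normalize G) G := normalize_associated G
  have hmon : (normalize G).Monic := monic_normalize hG0
  set D := normalize G with hD
  have hDg : D ∣ g := hGd.dvd.trans (EuclideanDomain.gcd_dvd_left _ _)
  have hDN : D ∣ X ^ n - 1 := hGd.dvd.trans (EuclideanDomain.gcd_dvd_right _ _)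
  let σ : FQ →+* FQ := iterateFrobenius FQ p m
  have hσN : (X ^ n - 1 : FQ[X]).map σ = X ^ n - 1 := by simp
  have hσg : g.map σ = X * g - C α * (X ^ n - 1) := by
    rw [hg, ← gpoly_pow _ _ _ (hQ α)]
    unfold gpoly
    rw [Polynomial.map_sum]
    refine Finset.sum_congr rfl fun i _ => ?_
    have : σ (α ^ (p ^ m) ^ i) = (α ^ p ^ m) ^ (p ^ m) ^ i := by
      rw [map_pow]
      rfl
    rw [Polynomial.map_mul, map_C, Polynomial.map_pow, map_X, this]
  have hσDN : D.map σ ∣ X ^ n - 1 := by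
    rw [← hσN]
    exact Polynomial.map_dvd σ hDN
  have hσDg : D.map σ ∣ g := by
    have h1 : D.map σ ∣ X * g := by
      have h2 : D.map σ ∣ X * g - C α * (X ^ n - 1) := hσg ▸ Polynomial.map_dvd σ hDg
      exact (dvd_iff_dvd_of_dvd_sub h2).2 (hσDN.mul_left _)
    -- `X` is a unit modulo `Xⁿ - 1`, with inverse `X ^ (n - 1)`.
    have h3 : g = X ^ (n - 1) * (X * g) - g * (X ^ n - 1) := by
      obtain ⟨k, rfl⟩ : ∃ k, n = k + 1 := ⟨n - 1, by omega⟩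
      rw [Nat.add_sub_cancel]
      ring
    rw [h3]
    exact dvd_sub (h1.mul_left _) (hσDN.mul_left _)
  have hσD : D.map σ = D :=
    eq_of_monic_of_dvd_of_natDegree_le (hmon.map σ) hmon
      ((EuclideanDomain.dvd_gcd hσDg hσDN).trans hGd.symm.dvd) (by rw [natDegree_map])
      |>.symm
  have hlift : D ∈ lifts (algebraMap Fq FQ) := by
    rw [lifts_iff_coeff_lifts]
    intro i
    refine mem_range_of_pow_eq _ ?_
    have := congrArg (fun P => P.coeff i) hσD
    rw [hcard]
    simpa [σ, iterateFrobenius_def] using this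
  obtain ⟨d, hd, hdeg, hdm⟩ := lifts_and_natDegree_eq_and_monic hlift hmon
  have hNmap : (X ^ n - 1 : Fq[X]).map (algebraMap Fq FQ) = X ^ n - 1 := by simp
  have hdN : d ∣ X ^ n - 1 := by
    rw [← map_dvd_map' (algebraMap Fq FQ), hd, hNmap]
    exact hDN
  obtain ⟨h, hh⟩ := hdN
  refine ⟨d, h, hdm, hh.symm,
    hdeg.trans (natDegree_eq_of_degree_eq (degree_eq_degree_of_associated hGd)), fun f => ?_⟩
  rw [lineval_eq_zero_iff p m n hn hF hQ, ← map_dvd_map' (algebraMap Fq FQ)]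
  have hN : (X ^ n - 1 : FQ[X]) = D * h.map (algebraMap Fq FQ) := by
    rw [← hNmap, hh, Polynomial.map_mul, hd]
  obtain ⟨u, hu⟩ := hDg
  have hcop : IsCoprime (h.map (algebraMap Fq FQ)) u := by
    -- The Bézout relation for the gcd, divided by `D`.
    set A := EuclideanDomain.gcdA g (X ^ n - 1)
    set B := EuclideanDomain.gcdB g (X ^ n - 1)
    have hb : G = g * A + (X ^ n - 1) * B := EuclideanDomain.gcd_eq_gcd_ab g (X ^ n - 1 : FQ[X])
    obtain ⟨c, hc⟩ := hGd.symm.dvd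
    refine ⟨c * B, c * A, mul_left_cancel₀ hmon.ne_zero ?_⟩
    linear_combination -(c * B) * hN - c * A * hu - c * hb - hc
  rw [← hg, hu, hN, mul_left_comm, mul_dvd_mul_iff_left hmon.ne_zero]
  exact ⟨hcop.dvd_of_dvd_mul_right, fun h => h.mul_right _⟩

end


theorem stmt_9 (p m n q : ℕ) (hp : p.Prime) (hm : 0 < m) (hq : q = p ^ m) (hn : 0 < n)
    {Fq FQ : Type*} [Field Fq] [Fintype Fq] [Field FQ] [Fintype FQ] [Algebra Fq FQ]
    (hcard : Fintype.card Fq = q) (hcardQ : Fintype.card FQ = q ^ n)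
    (hgcd : Nat.gcd n (q * (q - 1)) = 1)
    (α : FQ) (hα : α ≠ 0) :
    IsKNormal q n 1 α ↔
      IsMinPoly q α (∑ i ∈ Finset.range n, Polynomial.X ^ i : Polynomial Fq) := by
  classical
  subst hq
  have : Fact p.Prime := ⟨hp⟩
  have : CharP FQ p := charP_of_card_eq_prime_pow (f := m * n) (by rw [hcardQ, pow_mul])
  have hQ : ∀ β : FQ, β ^ (p ^ m) ^ n = β := fun β => hcardQ ▸ FiniteField.pow_card β
  obtain ⟨d, h, hdm, hdh, hdeg, hann⟩ := exists_descended_gcd (Fq := Fq) p m n hn hcard hQ α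
  have hk : IsKNormal (p ^ m) n 1 α ↔ d.natDegree = 1 := by
    rw [hdeg]
    unfold IsKNormal
    convert Iff.rfl
  have hgeom : (∑ i ∈ Finset.range n, X ^ i : Fq[X]) * (X - 1) = X ^ n - 1 := geom_sum_mul X n
  have hΦm : (∑ i ∈ Finset.range n, X ^ i : Fq[X]).Monic := monic_geom_sum_X hn.ne'
  have hX1 : (X - 1 : Fq[X]).Monic := by simpa using monic_X_sub_C (1 : Fq)
  have hX1d : (X - 1 : Fq[X]).natDegree = 1 := by simpa using natDegree_X_sub_C (1 : Fq)
  rw [hk]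
  constructor
  · intro h1
    obtain ⟨c, hc⟩ : ∃ c : Fq, d = X - C c :=
      ⟨-d.coeff 0, by rw [C_neg, sub_neg_eq_add, ← hdm.eq_X_add_C h1]⟩
    have hcn : c ^ n = 1 := by
      have := congrArg (eval c) hdh
      rw [hc] at this
      exact (sub_eq_zero.1 (by simpa using this.symm))
    have hc0 : c ≠ 0 := by
      rintro rfl
      simp [hn.ne'] at hcn
    have hc1 : c = 1 := by
      have hq1 : c ^ (p ^ m - 1) = 1 := hcard ▸ FiniteField.pow_card_sub_one_eq_one c hc0
      have hcop : n.gcd (p ^ m - 1) = 1 :=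
        Nat.Coprime.coprime_dvd_right (Dvd.intro_left _ rfl) hgcd
      have := pow_gcd_eq_one.2 ⟨hcn, hq1⟩
      rwa [hcop, pow_one] at this
    have hhΦ : h = ∑ i ∈ Finset.range n, X ^ i := by
      refine mul_left_cancel₀ hX1.ne_zero ?_
      rw [mul_comm _ (∑ i ∈ Finset.range n, X ^ i : Fq[X]), hgeom, ← hdh, hc, hc1, C_1]
    rw [← hhΦ] at hΦm ⊢
    exact ⟨hΦm, (hann h).2 dvd_rfl, fun f hf => (hann f).1 hf⟩
  · rintro ⟨-, h0, hmin⟩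
    have hhm : h.Monic := hdm.of_mul_monic_left (by
      rw [hdh]
      simpa using monic_X_pow_sub_C (1 : Fq) hn.ne')
    have hhΦ : h = ∑ i ∈ Finset.range n, X ^ i :=
      eq_of_monic_of_associated hhm hΦm
        (associated_of_dvd_dvd ((hann _).1 h0) (hmin _ ((hann h).2 dvd_rfl)))
    have hdX : d = X - 1 := by
      refine mul_right_cancel₀ hhm.ne_zero ?_
      rw [hdh, hhΦ, mul_comm, hgeom]
    rw [hdX, hX1d]
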